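/- Let x₀ be an interior point of I and let f, g, h : I → ℝ be continuous and strictly monotone. Suppose f and g are differentiable at x₀ and that A^[f] ≤ A^[h] ≤ A^[g]. Then h is differentiable at x₀. -/

import Mathlib

/-!
For increasing generators, `A^[f] ≤ A^[h]` makes `φ = h ∘ f⁻¹` midpoint convex (compare the means of
two points), hence convex by continuity; likewise `ψ = g ∘ h⁻¹` is convex. So `φ` and `ψ` have
one-sided derivatives `0 < φ₋ ≤ φ₊` at `f x₀` and `0 < ψ₋ ≤ ψ₊` at `h x₀`. By the chain rule the
one-sided derivatives of `h = φ ∘ f` at `x₀` are `φ₋ f'(x₀)` and `φ₊ f'(x₀)`, and those of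
`g = ψ ∘ h` are `ψ₋ φ₋ f'(x₀)` and `ψ₊ φ₊ f'(x₀)`. The latter two coincide, so either `f'(x₀) = 0`
or `ψ₋ φ₋ = ψ₊ φ₊`, which forces `φ₋ = φ₊`. Decreasing generators may be negated without changing
their means.
-/

open Set Function Filter

/-- The quasi-arithmetic mean generated by `f` on the interval `I`,
applied to a vector `a ∈ Iⁿ`: `f⁻¹((f a₁ + ⋯ + f aₙ)/n)`, where the
inverse of `f` is taken on `I`. -/
noncomputable def qam (I : Set ℝ) (f : ℝ → ℝ) {n : ℕ} (a : Fin n → ℝ) : ℝ :=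
  Function.invFunOn f I ((∑ i, f (a i)) / n)

/-- The natural (pointwise) partial order on quasi-arithmetic means:
`A^[f] ≤ A^[g]` iff `A^[f](a) ≤ A^[g](a)` for every `n ≥ 1` and every `a ∈ Iⁿ`. -/
def qamLE (I : Set ℝ) (f g : ℝ → ℝ) : Prop :=
  ∀ n : ℕ, 1 ≤ n → ∀ a : Fin n → ℝ, (∀ i, a i ∈ I) → qam I f a ≤ qam I g a

/-- `A^[f] = A^[g]` : equality of the two quasi-arithmetic means as means. -/
def qamEQ (I : Set ℝ) (f g : ℝ → ℝ) : Prop :=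
  ∀ n : ℕ, 1 ≤ n → ∀ a : Fin n → ℝ, (∀ i, a i ∈ I) → qam I f a = qam I g a

/-- `f` is strictly monotone on `I` (strictly increasing or strictly decreasing). -/
def StrictMonoOrAntiOn (f : ℝ → ℝ) (I : Set ℝ) : Prop :=
  StrictMonoOn f I ∨ StrictAntiOn f I

open Topology

section MidpointConvex

variable {E : Type*} [AddCommGroup E] [Module ℝ E] [TopologicalSpace E] [IsTopologicalAddGroup E]
  [ContinuousSMul ℝ E] {s : Set E}

theorem convex_of_isClosed_of_midpoint_mem (hs : IsClosed s)
    (hmid : ∀ x ∈ s, ∀ y ∈ s, midpoint ℝ x y ∈ s) : Convex ℝ s := by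
  refine convex_iff_segment_subset.2 fun x hx y hy => ?_
  set T : Set ℝ := AffineMap.lineMap x y ⁻¹' s with hT
  have hTc : IsClosed T := hs.preimage AffineMap.lineMap_continuous
  have hTmid : ∀ p ∈ T, ∀ q ∈ T, (p + q) / 2 ∈ T := fun p hp q hq => by
    rw [div_eq_inv_mul, ← smul_eq_mul, ← invOf_eq_inv, ← midpoint_eq_smul_add]
    simpa only [hT, mem_preimage, AffineMap.map_midpoint] using hmid _ hp _ hq
  have h0 : (0 : ℝ) ∈ T := by simpa [hT] using hx
  have h1 : (1 : ℝ) ∈ T := by simpa [hT] using hy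
  rw [segment_eq_image_lineMap]
  rintro _ ⟨t, ht, rfl⟩
  by_contra htT
  -- `t` lies in a maximal gap `(p, q)` of `T`, but the midpoint of the gap is in `T`
  obtain ⟨p, ⟨hpT, hp⟩, hpmax⟩ :=
    (isCompact_Icc.inter_left hTc).exists_isGreatest ⟨0, h0, left_mem_Icc.2 ht.1⟩
  obtain ⟨q, ⟨hqT, hq⟩, hqmin⟩ :=
    (isCompact_Icc.inter_left hTc).exists_isLeast ⟨1, h1, right_mem_Icc.2 ht.2⟩
  have hpt : p < t := hp.2.lt_of_ne fun h => htT (h ▸ hpT)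
  have htq : t < q := hq.1.lt_of_ne fun h => htT (h ▸ hqT)
  have hpm : p < (p + q) / 2 := left_lt_add_div_two.2 (hpt.trans htq)
  have hmq : (p + q) / 2 < q := add_div_two_lt_right.2 (hpt.trans htq)
  rcases le_total ((p + q) / 2) t with hmt | htm
  · exact hpm.not_ge (hpmax ⟨hTmid p hpT q hqT, hp.1.trans hpm.le, hmt⟩)
  · exact hmq.not_ge (hqmin ⟨hTmid p hpT q hqT, htm, hmq.le.trans hq.2⟩)

theorem convexOn_of_continuousOn_of_midpoint_le [T2Space E] {f : E → ℝ} (hs : Convex ℝ s)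
    (hf : ContinuousOn f s)
    (hmid : ∀ x ∈ s, ∀ y ∈ s, f (midpoint ℝ x y) ≤ midpoint ℝ (f x) (f y)) :
    ConvexOn ℝ s f := by
  refine ⟨hs, fun x hx y hy => ?_⟩
  have hsub : segment ℝ x y ⊆ s := hs.segment_subset hx hy
  have hclosed : IsClosed (segment ℝ x y) := by
    rw [← convexHull_pair]
    exact (Set.toFinite {x, y}).isClosed_convexHull ℝ
  have hconv : ConvexOn ℝ (segment ℝ x y) f := by
    refine convexOn_iff_convex_epigraph.2 <| convex_of_isClosed_of_midpoint_mem
      (hclosed.epigraph (hf.mono hsub)) ?_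
    rintro ⟨u, a⟩ ⟨hu, hua⟩ ⟨v, b⟩ ⟨hv, hvb⟩
    refine ⟨(convex_segment x y).midpoint_mem hu hv, (hmid u (hsub hu) v (hsub hv)).trans ?_⟩
    exact midpoint_le_midpoint hua hvb
  exact hconv.2 (left_mem_segment ℝ x y) (right_mem_segment ℝ x y)

end MidpointConvex

theorem continuousOn_of_strictMonoOn_of_ordConnected_image {α β : Type*} [LinearOrder α]
    [TopologicalSpace α] [OrderTopology α] [LinearOrder β] [TopologicalSpace β] [OrderTopology β]
    {f : α → β} {s : Set α} [s.OrdConnected] [(f '' s).OrdConnected]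
    (hf : StrictMonoOn f s) : ContinuousOn f s :=
  continuousOn_iff_continuous_domRestrict.2 <|
    continuous_subtype_val.comp (hf.orderIso f s).continuous

theorem image_mem_nhds_of_strictMonoOn {α β : Type*} [ConditionallyCompleteLinearOrder α]
    [DenselyOrdered α] [NoMinOrder α] [NoMaxOrder α] [TopologicalSpace α] [OrderTopology α]
    [LinearOrder β] [TopologicalSpace β] [OrderTopology β] {f : α → β} {s : Set α} {x : α}
    (hf : StrictMonoOn f s) (hfc : ContinuousOn f s) (hs : s ∈ 𝓝 x) : f '' s ∈ 𝓝 (f x) := by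
  obtain ⟨a, b, hx, hab⟩ := mem_nhds_iff_exists_Ioo_subset.1 hs
  obtain ⟨p, hp⟩ := exists_between hx.1
  obtain ⟨q, hq⟩ := exists_between hx.2
  have hxs := hab hx
  have hpq : Icc p q ⊆ s := fun y hy => hab ⟨hp.1.trans_le hy.1, hy.2.trans_lt hq.2⟩
  have hle := (hp.2.trans hq.1).le
  refine mem_of_superset (Icc_mem_nhds (hf (hpq (left_mem_Icc.2 hle)) hxs hp.2)
    (hf hxs (hpq (right_mem_Icc.2 hle)) hq.1)) ?_
  exact (intermediate_value_Icc hle (hfc.mono hpq)).trans (image_mono hpq)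

theorem exists_strictMonoOn_image_comp_eqOn {α β γ : Type*} [LinearOrder α] [Nonempty α]
    [Preorder β] [Preorder γ] {f : α → β} {h : α → γ} {s : Set α} (hf : StrictMonoOn f s)
    (hh : StrictMonoOn h s) :
    ∃ φ : β → γ, StrictMonoOn φ (f '' s) ∧ EqOn (φ ∘ f) h s := by
  have heq : EqOn ((h ∘ invFunOn f s) ∘ f) h s := fun a ha =>
    congrArg h (hf.injOn.leftInvOn_invFunOn ha)
  refine ⟨h ∘ invFunOn f s, ?_, heq⟩
  rintro _ ⟨a, ha, rfl⟩ _ ⟨b, hb, rfl⟩ hab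
  exact (heq ha).trans_lt <| (hh ha hb ((hf.lt_iff_lt ha hb).1 hab)).trans_eq (heq hb).symm

theorem invFunOn_neg_neg {α β : Type*} [Nonempty α] [InvolutiveNeg β] (f : α → β) (s : Set α)
    (b : β) : invFunOn (-f) s (-b) = invFunOn f s b := by
  unfold invFunOn
  congr! 3 <;> simp only [Pi.neg_apply, neg_inj]

section QuasiArithmeticMean

variable {I : Set ℝ} {f h : ℝ → ℝ}

theorem qam_neg {n : ℕ} (a : Fin n → ℝ) : qam I (-f) a = qam I f a := by
  rw [qam, qam, ← invFunOn_neg_neg f]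
  simp only [Pi.neg_apply, Finset.sum_neg_distrib, neg_div]

theorem qamLE_neg_left : qamLE I (-f) h ↔ qamLE I f h := by
  simp only [qamLE, qam_neg]

theorem qamLE_neg_right : qamLE I f (-h) ↔ qamLE I f h := by
  simp only [qamLE, qam_neg]

theorem mean_mem_image (hI : I.OrdConnected) (hf : ContinuousOn f I) {n : ℕ} (hn : n ≠ 0)
    {a : Fin n → ℝ} (ha : ∀ i, a i ∈ I) : (∑ i, f (a i)) / n ∈ f '' I := by
  have hconv : Convex ℝ (f '' I) := (hI.isPreconnected.image f hf).ordConnected.convex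
  rw [div_eq_inv_mul, Finset.mul_sum]
  exact hconv.sum_mem (fun _ _ => by positivity) (by simp [hn])
    fun i _ => mem_image_of_mem f (ha i)

theorem qam_mem (hI : I.OrdConnected) (hf : ContinuousOn f I) {n : ℕ} (hn : n ≠ 0)
    {a : Fin n → ℝ} (ha : ∀ i, a i ∈ I) : qam I f a ∈ I :=
  invFunOn_mem (mean_mem_image hI hf hn ha)

theorem apply_qam (hI : I.OrdConnected) (hf : ContinuousOn f I) {n : ℕ} (hn : n ≠ 0)
    {a : Fin n → ℝ} (ha : ∀ i, a i ∈ I) : f (qam I f a) = (∑ i, f (a i)) / n :=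
  invFunOn_eq (mean_mem_image hI hf hn ha)

theorem apply_qam_pair (hI : I.OrdConnected) (hf : ContinuousOn f I) {a b : ℝ} (ha : a ∈ I)
    (hb : b ∈ I) : f (qam I f ![a, b]) = midpoint ℝ (f a) (f b) := by
  rw [apply_qam hI hf two_ne_zero (Fin.forall_fin_two.2 ⟨ha, hb⟩)]
  simp [midpoint_eq_smul_add, div_eq_inv_mul]

theorem qamLE.convexOn {φ : ℝ → ℝ} (hfh : qamLE I f h) (hI : I.OrdConnected)
    (hf : ContinuousOn f I) (hhc : ContinuousOn h I) (hh : MonotoneOn h I)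
    (hφ : StrictMonoOn φ (f '' I)) (hφf : EqOn (φ ∘ f) h I) : ConvexOn ℝ (f '' I) φ := by
  have hfI : (f '' I).OrdConnected := (hI.isPreconnected.image f hf).ordConnected
  have hφI : (φ '' (f '' I)).OrdConnected := by
    rw [← image_comp, hφf.image_eq]
    exact (hI.isPreconnected.image h hhc).ordConnected
  refine convexOn_of_continuousOn_of_midpoint_le hfI.convex
    (continuousOn_of_strictMonoOn_of_ordConnected_image hφ) ?_
  rintro _ ⟨a, ha, rfl⟩ _ ⟨b, hb, rfl⟩
  have hab : ∀ i, ![a, b] i ∈ I := Fin.forall_fin_two.2 ⟨ha, hb⟩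
  have hfm : qam I f ![a, b] ∈ I := qam_mem hI hf two_ne_zero hab
  have hhm : qam I h ![a, b] ∈ I := qam_mem hI hhc two_ne_zero hab
  calc φ (midpoint ℝ (f a) (f b))
      = h (qam I f ![a, b]) := by rw [← apply_qam_pair hI hf ha hb]; exact hφf hfm
    _ ≤ h (qam I h ![a, b]) := hh hfm hhm (hfh 2 one_le_two _ hab)
    _ = midpoint ℝ (φ (f a)) (φ (f b)) := by
      rw [apply_qam_pair hI hhc ha hb, ← hφf ha, ← hφf hb, comp_apply, comp_apply]

theorem qamLE.exists_convexOn_comp_eqOn (hfh : qamLE I f h) (hI : I.OrdConnected)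
    (hfc : ContinuousOn f I) (hhc : ContinuousOn h I) (hf : StrictMonoOn f I)
    (hh : StrictMonoOn h I) :
    ∃ φ : ℝ → ℝ, ConvexOn ℝ (f '' I) φ ∧ StrictMonoOn φ (f '' I) ∧ EqOn (φ ∘ f) h I := by
  obtain ⟨φ, hφ, hφf⟩ := exists_strictMonoOn_image_comp_eqOn hf hh
  exact ⟨φ, hfh.convexOn hI hfc hhc hh.monotoneOn hφ hφf, hφ, hφf⟩

end QuasiArithmeticMean

section OneSidedDeriv

variable {s t I : Set ℝ} {φ ψ f : ℝ → ℝ} {c x : ℝ}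

theorem leftDeriv_pos_of_convexOn_of_strictMonoOn (hφ : ConvexOn ℝ s φ) (hφm : StrictMonoOn φ s)
    (hx : x ∈ interior s) : 0 < derivWithin φ (Iio x) x := by
  have hxs := interior_subset hx
  obtain ⟨y, hyx, hys⟩ :=
    Filter.nonempty_of_mem (inter_mem_nhdsWithin (Iio x) (mem_interior_iff_mem_nhds.1 hx))
  refine lt_of_lt_of_le ?_ (hφ.slope_le_leftDeriv_of_mem_interior hys hx hyx)
  rw [slope_def_field]
  exact div_pos (sub_pos.2 (hφm hys hxs hyx)) (sub_pos.2 hyx)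

theorem hasDerivWithinAt_comp_Iio_of_convexOn (hφ : ConvexOn ℝ s φ) (hx : f x ∈ interior s)
    (hI : I ∈ 𝓝 x) (hf : StrictMonoOn f I) (hfd : HasDerivWithinAt f c (Iio x) x) :
    HasDerivWithinAt (φ ∘ f) (derivWithin φ (Iio (f x)) (f x) * c) (Iio x) x := by
  have hmaps : MapsTo f (Iio x ∩ I) (Iio (f x)) := fun y hy => hf hy.2 (mem_of_mem_nhds hI) hy.1
  exact (hasDerivWithinAt_inter hI).1 <|
    (hφ.hasDerivWithinAt_leftDeriv_of_mem_interior hx).comp x (hfd.mono inter_subset_left) hmaps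

theorem hasDerivWithinAt_comp_Ioi_of_convexOn (hφ : ConvexOn ℝ s φ) (hx : f x ∈ interior s)
    (hI : I ∈ 𝓝 x) (hf : StrictMonoOn f I) (hfd : HasDerivWithinAt f c (Ioi x) x) :
    HasDerivWithinAt (φ ∘ f) (derivWithin φ (Ioi (f x)) (f x) * c) (Ioi x) x := by
  have hmaps : MapsTo f (Ioi x ∩ I) (Ioi (f x)) := fun y hy => hf (mem_of_mem_nhds hI) hy.2 hy.1
  exact (hasDerivWithinAt_inter hI).1 <|
    (hφ.hasDerivWithinAt_rightDeriv_of_mem_interior hx).comp x (hfd.mono inter_subset_left) hmaps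

theorem differentiableAt_comp_of_convexOn (hφ : ConvexOn ℝ s φ) (hψ : ConvexOn ℝ t ψ)
    (hφm : StrictMonoOn φ s) (hψm : StrictMonoOn ψ t) (hx : f x ∈ interior s)
    (hx' : φ (f x) ∈ interior t) (hI : I ∈ 𝓝 x) (hf : StrictMonoOn f I) (hfI : MapsTo f I s)
    (hfd : DifferentiableAt ℝ f x) (hgd : DifferentiableAt ℝ (ψ ∘ φ ∘ f) x) :
    DifferentiableAt ℝ (φ ∘ f) x := by
  have hφf : StrictMonoOn (φ ∘ f) I := hφm.comp hf hfI
  have hl := hasDerivWithinAt_comp_Iio_of_convexOn hφ hx hI hf hfd.hasDerivAt.hasDerivWithinAt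
  have hr := hasDerivWithinAt_comp_Ioi_of_convexOn hφ hx hI hf hfd.hasDerivAt.hasDerivWithinAt
  have hgl : deriv (ψ ∘ φ ∘ f) x = derivWithin ψ (Iio (φ (f x))) (φ (f x)) *
      (derivWithin φ (Iio (f x)) (f x) * deriv f x) :=
    (uniqueDiffWithinAt_Iio x).eq_deriv _ hgd.hasDerivAt.hasDerivWithinAt
      (hasDerivWithinAt_comp_Iio_of_convexOn hψ hx' hI hφf hl)
  have hgr : deriv (ψ ∘ φ ∘ f) x = derivWithin ψ (Ioi (φ (f x))) (φ (f x)) *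
      (derivWithin φ (Ioi (f x)) (f x) * deriv f x) :=
    (uniqueDiffWithinAt_Ioi x).eq_deriv _ hgd.hasDerivAt.hasDerivWithinAt
      (hasDerivWithinAt_comp_Ioi_of_convexOn hψ hx' hI hφf hr)
  have hφlr := hφ.leftDeriv_le_rightDeriv_of_mem_interior hx
  have hψlr := hψ.leftDeriv_le_rightDeriv_of_mem_interior hx'
  have hφl := leftDeriv_pos_of_convexOn_of_strictMonoOn hφ hφm hx
  have hψl := leftDeriv_pos_of_convexOn_of_strictMonoOn hψ hψm hx'
  have hlr : derivWithin φ (Iio (f x)) (f x) * deriv f x =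
      derivWithin φ (Ioi (f x)) (f x) * deriv f x := by
    rcases eq_or_ne (deriv f x) 0 with hc | hc
    · rw [hc, mul_zero, mul_zero]
    have hprod := hgl.symm.trans hgr
    simp only [← mul_assoc] at hprod
    rw [((mul_eq_mul_iff_eq_and_eq_of_pos hψlr hφlr hψl (hφl.trans_le hφlr)).1
      (mul_right_cancel₀ hc hprod)).2]
  exact (hl.Iic_of_Iio.union (hlr ▸ hr).Ici_of_Ioi).hasDerivAt (by simp) |>.differentiableAt

end OneSidedDeriv

theorem differentiableAt_of_qamLE_of_strictMonoOn {I : Set ℝ} {f g h : ℝ → ℝ} {x : ℝ}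
    (hI : I.OrdConnected) (hx : I ∈ 𝓝 x) (hfc : ContinuousOn f I) (hgc : ContinuousOn g I)
    (hhc : ContinuousOn h I) (hf : StrictMonoOn f I) (hg : StrictMonoOn g I)
    (hh : StrictMonoOn h I) (hfd : DifferentiableAt ℝ f x) (hgd : DifferentiableAt ℝ g x)
    (hfh : qamLE I f h) (hhg : qamLE I h g) : DifferentiableAt ℝ h x := by
  obtain ⟨φ, hφ, hφm, hφf⟩ := hfh.exists_convexOn_comp_eqOn hI hfc hhc hf hh
  obtain ⟨ψ, hψ, hψm, hψh⟩ := hhg.exists_convexOn_comp_eqOn hI hhc hgc hh hg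
  have hfx : f x ∈ interior (f '' I) :=
    mem_interior_iff_mem_nhds.2 (image_mem_nhds_of_strictMonoOn hf hfc hx)
  have hhx : φ (f x) ∈ interior (h '' I) := by
    rw [show φ (f x) = h x from hφf (mem_of_mem_nhds hx)]
    exact mem_interior_iff_mem_nhds.2 (image_mem_nhds_of_strictMonoOn hh hhc hx)
  have hφf' : φ ∘ f =ᶠ[𝓝 x] h := hφf.eventuallyEq_of_mem hx
  have hψφf : ψ ∘ φ ∘ f =ᶠ[𝓝 x] g :=
    (hφf'.fun_comp ψ).trans (hψh.eventuallyEq_of_mem hx)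
  exact hφf'.differentiableAt_iff.1 <| differentiableAt_comp_of_convexOn hφ hψ hφm hψm hfx hhx hx
    hf (mapsTo_image f I) hfd (hψφf.differentiableAt_iff.2 hgd)

/-- Theorem 4: if `f, g` are differentiable at an interior point `x₀`
and `A^[f] ≤ A^[h] ≤ A^[g]`, then `h` is differentiable at `x₀`. -/
theorem differentiable_at_interval_type
    (I : Set ℝ) (hI : I.OrdConnected) (hInontriv : ∃ x ∈ I, ∃ y ∈ I, x < y)
    (x₀ : ℝ) (hx₀ : x₀ ∈ interior I)
    (f g h : ℝ → ℝ)
    (hfc : ContinuousOn f I) (hgc : ContinuousOn g I) (hhc : ContinuousOn h I)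
    (hfm : StrictMonoOrAntiOn f I) (hgm : StrictMonoOrAntiOn g I)
    (hhm : StrictMonoOrAntiOn h I)
    (hfd : DifferentiableWithinAt ℝ f I x₀)
    (hgd : DifferentiableWithinAt ℝ g I x₀)
    (hle₁ : qamLE I f h) (hle₂ : qamLE I h g) :
    DifferentiableWithinAt ℝ h I x₀ := by
  have hI₀ : I ∈ 𝓝 x₀ := mem_interior_iff_mem_nhds.1 hx₀
  replace hfd := hfd.differentiableAt hI₀
  replace hgd := hgd.differentiableAt hI₀
  refine DifferentiableAt.differentiableWithinAt ?_
  wlog hf : StrictMonoOn f I generalizing f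
  · have hf' := (hfm.resolve_left hf).neg
    exact this (-f) hfc.neg (.inl hf') (qamLE_neg_left.2 hle₁) hfd.neg hf'
  wlog hg : StrictMonoOn g I generalizing g
  · have hg' := (hgm.resolve_left hg).neg
    exact this (-g) hgc.neg (.inl hg') (qamLE_neg_right.2 hle₂) hgd.neg hg'
  wlog hh : StrictMonoOn h I generalizing h
  · have hh' := (hhm.resolve_left hh).neg
    exact differentiableAt_neg_iff.1 <|
      this (-h) hhc.neg (.inl hh') (qamLE_neg_right.2 hle₁) (qamLE_neg_left.2 hle₂) hh'
  exact differentiableAt_of_qamLE_of_strictMonoOn hI hI₀ hfc hgc hhc hf hg hh hfd hgd hle₁ hle₂
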